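/- Suppose the NICF expansion of α has ε_i = +1 for all i (so it coincides with the regular continued fraction expansion of α, all of whose partial quotients satisfy a_i ≥ 2), and suppose R := liminf_{i→∞} a_i is finite. Then M(α,γ_**) ≥ (1/4)·(1 − 2/R_*)·(1 − 2θ_1² − θ_1³), and this quantity is ≥ (1/4)·(1 − 2/R_* − 2/R_*² + 3/R_*³). -/

import Mathlib

open Filter Finset

attribute [local instance] Classical.propDecidable

/-- Distance from `x` to the nearest integer, `‖x‖`. -/
noncomputable def nint (x : ℝ) : ℝ := |x - round x|

/-- The two-sided inhomogeneous approximation constant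
`M(α,γ) = liminf_{|n|→∞} |n|·‖nα-γ‖`. -/
noncomputable def Mval (α γ : ℝ) : ℝ :=
  Filter.liminf (fun n : ℤ => (|n| : ℝ) * nint (n * α - γ)) Filter.cofinite

/-- `ρ(α) = sup { M(α,γ) : γ ∉ ℤ + αℤ }`. -/
noncomputable def rho (α : ℝ) : ℝ :=
  sSup {m : ℝ | ∃ γ : ℝ, (¬∃ p q : ℤ, γ = (p : ℝ) + (q : ℝ) * α) ∧ m = Mval α γ}

/-- The tails `α_i` of the nearest integer continued fraction expansion of `α`. -/
noncomputable def nicfT (α : ℝ) : ℕ → ℝ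
  | 0 => α
  | i + 1 =>
    if Int.fract (nicfT α i)⁻¹ ≤ 1 / 2 then Int.fract (nicfT α i)⁻¹
    else 1 - Int.fract (nicfT α i)⁻¹

/-- The partial quotients `a_i` (meaningful for `i ≥ 1`) of the NICF expansion. -/
noncomputable def nicfA (α : ℝ) : ℕ → ℤ
  | 0 => 0
  | i + 1 => if Int.fract (nicfT α i)⁻¹ ≤ 1 / 2 then ⌊(nicfT α i)⁻¹⌋ else ⌈(nicfT α i)⁻¹⌉

/-- The signs `ε_i` of the NICF expansion (`ε_1 = 1`). -/
noncomputable def nicfE (α : ℝ) : ℕ → ℤ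
  | 0 => 1
  | 1 => 1
  | i + 2 => if Int.fract (nicfT α i)⁻¹ ≤ 1 / 2 then 1 else -1

/-- `nicfD α n = D_{n-1} = α_0 α_1 ⋯ α_{n-1}` (so `nicfD α 0 = 1`, `nicfD α 1 = α`). -/
noncomputable def nicfD (α : ℝ) (n : ℕ) : ℝ := ∏ j ∈ Finset.range n, nicfT α j

/-- The number of indices `1 ≤ k ≤ i` with `a_k` odd. -/
noncomputable def oddIdx (α : ℝ) (i : ℕ) : ℕ :=
  ((Finset.Icc 1 i).filter fun k => Odd (nicfA α k)).card

/-- `λ_i`: zero if `a_i` is even, `(-1)^j` if `a_i = a_{n_j}` is the `j`-th odd partial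
quotient. -/
noncomputable def lamStar (α : ℝ) (i : ℕ) : ℤ :=
  if Odd (nicfA α i) then (-1) ^ oddIdx α i else 0

/-- `γ_* = Σ_{i≥1} (a_i - 1 + ε_i + λ_i)/2 · D_{i-1}`. -/
noncomputable def gammaStar (α : ℝ) : ℝ :=
  ∑' k : ℕ,
    (((nicfA α (k + 1) : ℝ) - 1 + (nicfE α (k + 1) : ℝ) + (lamStar α (k + 1) : ℝ)) / 2) *
      nicfD α (k + 1)

/-- `λ'_i`: zero if `a_i` is even, one if `a_i` is odd. -/
noncomputable def lamStar2 (α : ℝ) (i : ℕ) : ℤ := if Odd (nicfA α i) then 1 else 0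

/-- `γ_** = Σ_{i≥1} (a_i + λ'_i)/2 · D_{i-1}`. -/
noncomputable def gammaStar2 (α : ℝ) : ℝ :=
  ∑' k : ℕ, (((nicfA α (k + 1) : ℝ) + (lamStar2 α (k + 1) : ℝ)) / 2) * nicfD α (k + 1)

/-- The denominators `q_i`: `q_0 = 1`, `q_1 = a_1`, `q_i = a_i q_{i-1} + ε_i q_{i-2}`. -/
noncomputable def qseq (α : ℝ) : ℕ → ℤ
  | 0 => 1
  | 1 => nicfA α 1
  | i + 2 => nicfA α (i + 2) * qseq α (i + 1) + nicfE α (i + 2) * qseq α i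

/-- `ᾱ_i = q_{i-1}/q_i` (with `ᾱ_0 = 0`). -/
noncomputable def abar (α : ℝ) (i : ℕ) : ℝ :=
  if i = 0 then 0 else (qseq α (i - 1) : ℝ) / (qseq α i : ℝ)

/-- `δ_i = -(-ε_1)(-ε_2)⋯(-ε_{i+1})`. -/
noncomputable def deltaSeq (α : ℝ) (i : ℕ) : ℤ := -∏ j ∈ Finset.Icc 1 (i + 1), (-nicfE α j)

/-- `d_n^- = (Σ_{i=1}^n t_i δ_{i-1} q_{i-1}) / (δ_{n-1} q_n)` for `γ_*` (so `t_i = λ_i`). -/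
noncomputable def dminus (α : ℝ) (n : ℕ) : ℝ :=
  (∑ i ∈ Finset.Icc 1 n, (lamStar α i : ℝ) * (deltaSeq α (i - 1) : ℝ) * (qseq α (i - 1) : ℝ)) /
    ((deltaSeq α (n - 1) : ℝ) * (qseq α n : ℝ))

/-- `d_n^+ = (Σ_{i=n+1}^∞ t_i D_{i-1}) / D_{n-1}` for `γ_*` (so `t_i = λ_i`). -/
noncomputable def dplus (α : ℝ) (n : ℕ) : ℝ :=
  (∑' k : ℕ, (lamStar α (n + 1 + k) : ℝ) * nicfD α (n + 1 + k)) / nicfD α n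

/-- `d_n^-` for `γ_**` (so `t_i = λ'_i`). -/
noncomputable def dminus2 (α : ℝ) (n : ℕ) : ℝ :=
  (∑ i ∈ Finset.Icc 1 n, (lamStar2 α i : ℝ) * (deltaSeq α (i - 1) : ℝ) * (qseq α (i - 1) : ℝ)) /
    ((deltaSeq α (n - 1) : ℝ) * (qseq α n : ℝ))

/-- `d_n^+` for `γ_**` (so `t_i = λ'_i`). -/
noncomputable def dplus2 (α : ℝ) (n : ℕ) : ℝ :=
  (∑' k : ℕ, (lamStar2 α (n + 1 + k) : ℝ) * nicfD α (n + 1 + k)) / nicfD α n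

/-- `i ∈ S(γ_*)`: `|d_i^-| ≤ 1 - ᾱ_i` and `-(1-ε_{i+1}α_i) ≤ d_i^+ ≤ 1+ε_{i+1}α_i`. -/
def inS (α : ℝ) (i : ℕ) : Prop :=
  |dminus α i| ≤ 1 - abar α i ∧
    -(1 - (nicfE α (i + 1) : ℝ) * nicfT α i) ≤ dplus α i ∧
      dplus α i ≤ 1 + (nicfE α (i + 1) : ℝ) * nicfT α i

/-- `i ∈ S(γ_**)`. -/
def inS2 (α : ℝ) (i : ℕ) : Prop :=
  |dminus2 α i| ≤ 1 - abar α i ∧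
    -(1 - (nicfE α (i + 1) : ℝ) * nicfT α i) ≤ dplus2 α i ∧
      dplus2 α i ≤ 1 + (nicfE α (i + 1) : ℝ) * nicfT α i

/-- The remainders `γ_i` of the alpha-expansion of `γ`: `γ_0 = γ`,
`γ_{i+1} = {γ_i/α_i}`. -/
noncomputable def gSeq (α γ : ℝ) : ℕ → ℝ
  | 0 => γ
  | i + 1 => Int.fract (gSeq α γ i / nicfT α i)

/-- The coefficients `c_i` (for `i ≥ 1`) of the alpha-expansion of `γ`:
`c_{i+1} = ⌊γ_i/α_i⌋`. -/
noncomputable def cCoef (α γ : ℝ) (i : ℕ) : ℤ := ⌊gSeq α γ (i - 1) / nicfT α (i - 1)⌋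


/-- two-variable reduction to extreme points -/
lemma aux_extreme (u r c d N T : ℝ) (hu : 1 ≤ u) (hr : 1 ≤ r) (hc : 0 < 1 + c) (hd : 0 < 1 + d)
    (hN : N ≤ u + r) (hN2 : 2 ≤ N)
    (h1 : T ≤ (1 + c) * (N - 1 + d)) (h2 : T ≤ (N - 1 + c) * (1 + d)) :
    T ≤ (u + c) * (r + d) := by
  rcases le_total c d with h | h
  · nlinarith [mul_nonneg (sub_nonneg.2 hu) (sub_nonneg.2 hr),
      mul_nonneg (sub_nonneg.2 h) (sub_nonneg.2 hu), mul_nonneg hc.le (sub_nonneg.2 hN)]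
  · nlinarith [mul_nonneg (sub_nonneg.2 hu) (sub_nonneg.2 hr),
      mul_nonneg (sub_nonneg.2 h) (sub_nonneg.2 hr), mul_nonneg hd.le (sub_nonneg.2 hN)]

/-- basic facts on theta -/
lemma aux_theta (Rs θ : ℝ) (hRs : 3 ≤ Rs) (h : θ = (Real.sqrt (Rs ^ 2 + 4) - Rs) / 2) :
    0 < θ ∧ θ * (Rs + θ) = 1 ∧ θ ≤ 1 / 3 := by
  have hs : Real.sqrt (Rs ^ 2 + 4) ^ 2 = Rs ^ 2 + 4 := Real.sq_sqrt (by positivity)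
  have hs0 : Rs < Real.sqrt (Rs ^ 2 + 4) := by
    apply Real.lt_sqrt_of_sq_lt; linarith
  have h1 : θ * (Rs + θ) = 1 := by rw [h]; nlinarith
  have h0 : 0 < θ := by rw [h]; linarith
  refine ⟨h0, h1, ?_⟩
  nlinarith

lemma aux_second (Rs θ : ℝ) (hRs : 3 ≤ Rs) (h0 : 0 < θ) (h1 : θ * (Rs + θ) = 1) :
    1 / 4 * (1 - 2 / Rs) * (1 - 2 * θ ^ 2 - θ ^ 3) ≥
        1 / 4 * (1 - 2 / Rs - 2 / Rs ^ 2 + 3 / Rs ^ 3) := by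
  obtain ⟨x, hx⟩ : ∃ x, x = 1 / Rs := ⟨_, rfl⟩
  have hxR : x * Rs = 1 := by rw [hx]; field_simp
  have hx0 : 0 < x := by rw [hx]; positivity
  have hx3 : x ≤ 1 / 3 := by rw [hx]; gcongr
  have hθx : θ ≤ x := by
    rw [hx, le_div_iff₀ (by linarith)]; nlinarith
  have e1 : 2 / Rs = 2 * x := by rw [hx]; ring
  have e2 : 2 / Rs ^ 2 = 2 * x ^ 2 := by rw [hx]; field_simp
  have e3 : 3 / Rs ^ 3 = 3 * x ^ 3 := by rw [hx]; field_simp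
  rw [e1, e2, e3]
  have a2 : θ ^ 2 ≤ x ^ 2 := by gcongr
  have a3 : θ ^ 3 ≤ x ^ 3 := by gcongr
  have : (1 - 2 * x) * (2 * θ ^ 2 + θ ^ 3) ≤ (1 - 2 * x) * (2 * x ^ 2 + x ^ 3) := by
    apply mul_le_mul_of_nonneg_left <;> linarith
  have : 0 ≤ x ^ 4 := by positivity
  nlinarith

/-- core inequality: `1 + t - f ≥ B2 (1 + t / Rs)` (odd next partial quotient) -/
lemma aux_core (Rs θ c y a t t' f' : ℝ) (hRs : 3 ≤ Rs) (h0 : 0 < θ) (h1 : θ * (Rs + θ) = 1)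
    (h3 : θ ≤ 1 / 3) (hc : c = 2 * θ ^ 2 + θ ^ 3) (hy : y * Rs = 1) (ha : Rs ≤ a)
    (ht : 0 < t) (ht' : 0 < t') (hta : t * (a + t') = 1)
    (hf : Rs * f' ≤ 1 + t' - |t' - θ|) :
    (1 - c) * (1 + t * y) ≤ 1 + t - t * (1 + f') := by
  have hy0 : 0 < y := by
    by_contra hh
    nlinarith
  have hRθ : Rs * θ = 1 - θ ^ 2 := by nlinarith
  have hyθ : y * (1 - θ ^ 2) = θ := by rw [← hRθ]; linear_combination θ * hy
  have hc0 : 0 ≤ c := by rw [hc]; positivity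
  have hcy : c ≤ y := by
    have : θ ≤ y := by nlinarith
    have : c ≤ θ := by rw [hc]; nlinarith
    linarith
  have hfy : f' ≤ y * (1 + t' - |t' - θ|) := by
    have := mul_le_mul_of_nonneg_left hf hy0.le
    have h4 : y * (Rs * f') = f' := by rw [← mul_assoc, hy, one_mul]
    linarith
  have key : c * Rs + c * θ = y * (2 + θ - c) := by
    have e1 : c * Rs + c * θ = 2 * θ + θ ^ 2 := by
      have : c = θ * (2 * θ + θ ^ 2) := by rw [hc]; ring
      rw [this]; linear_combination (2 * θ + θ ^ 2) * h1
    rw [e1, hc]; linear_combination (-(2 + θ)) * hyθ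
  have main : 0 ≤ c * Rs + c * t' - f' - (1 - c) * y := by
    rcases le_total t' θ with h | h
    · have : |t' - θ| = θ - t' := by rw [abs_of_nonpos] <;> linarith
      rw [this] at hfy
      nlinarith [mul_nonneg (sub_nonneg.2 hcy) (sub_nonneg.2 h), mul_nonneg hy0.le (sub_nonneg.2 h)]
    · have : |t' - θ| = t' - θ := by rw [abs_of_nonneg]; linarith
      rw [this] at hfy
      nlinarith [mul_nonneg hc0 (sub_nonneg.2 h)]
  have main2 : 0 ≤ c * (a + t') - f' - (1 - c) * y := by nlinarith
  have := mul_nonneg ht.le main2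
  have e : t * (c * (a + t') - f' - (1 - c) * y) = c - t * f' - (1-c) * (t * y) := by
    linear_combination c * hta
  rw [e] at this
  nlinarith

/-- P1, A odd -/
lemma aux_P1o (Rs θ c y A s t e f : ℝ) (hRs : 3 ≤ Rs) (h0 : 0 < θ) (h1 : θ * (Rs + θ) = 1)
    (h3 : θ ≤ 1 / 3) (hc : c = 2 * θ ^ 2 + θ ^ 3) (hy : y * Rs = 1) (hA : Rs ≤ A)
    (hs : 0 ≤ s) (ht : 0 < t) (htR : t * (Rs - 1) ≤ 1) (he : -(s / 2) ≤ e)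
    (hX : (1 - c) * (1 + t * y) ≤ 1 + t - f) :
    (1 - 2 * y) * (1 - c) * (A + s + t) ≤ (1 + (s + e)) * (A - 1 - 1 + (t - f)) := by
  have hy0 : 0 < y := by
    by_contra hh
    nlinarith
  have hy3 : y ≤ 1 / 3 := by nlinarith
  have hc0 : 0 ≤ c := by rw [hc]; positivity
  have hc1 : c ≤ 1 / 3 := by rw [hc]; nlinarith
  have hAy : 1 ≤ A * y := by nlinarith
  have q1 : A + s + t ≤ (1 + (s + e)) * (A + t) := by nlinarith
  -- A (1-c)... 
  have q2 : (1 - 2 * y) * (1 - c) * (A + t) ≤ A - 2 + (t - f) := by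
    have r1 : (1 - 2 * y) * A ≥ A - 2 * (A * y) := by nlinarith
    have r0 : A - 2 ≥ (1 - 2 * y) * A ∨ True := Or.inr trivial
    rcases le_total (1 + t - f) 1 with h | h
    · -- A-3+X ≥ (A-2) X ≥ (A-2)(1-c)(1+ty)
      have r2 : (A - 2) * (1 + t - f) ≤ A - 2 + (t - f) := by nlinarith
      have r3 : (A - 2) * ((1 - c) * (1 + t * y)) ≤ (A - 2) * (1 + t - f) := by
        apply mul_le_mul_of_nonneg_left hX; linarith
      have r4 : (1 - 2 * y) * (A + t) ≤ (A - 2) * (1 + t * y) := by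
        have : 0 ≤ (A * y - 1) * t := by apply mul_nonneg <;> linarith
        nlinarith
      have r5 : (1 - c) * ((1 - 2 * y) * (A + t)) ≤ (1 - c) * ((A - 2) * (1 + t * y)) := by
        apply mul_le_mul_of_nonneg_left r4; linarith
      nlinarith
    · have r2 : (1 - c) * (A + t) ≤ A := by
        have hRθ : Rs * θ = 1 - θ ^ 2 := by nlinarith
        have k1 : t ≤ 2 * θ := by
          have : θ * (t * (Rs - 1)) ≤ θ := by nlinarith
          have e1 : θ * (t * (Rs - 1)) = t * (1 - θ ^ 2 - θ) := by
            linear_combination t * hRθ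
          nlinarith
        have k2 : 2 * θ ≤ c * Rs := by
          have : c * Rs = (2 * θ + θ ^ 2) * (1 - θ ^ 2) := by
            rw [hc]; linear_combination (2 * θ + θ ^ 2) * hRθ
          rw [this]
          nlinarith [mul_pos h0 h0, mul_pos (mul_pos h0 h0) h0]
        nlinarith
      have r5 : (1 - 2 * y) * ((1 - c) * (A + t)) ≤ (1 - 2 * y) * A := by
        apply mul_le_mul_of_nonneg_left r2; linarith
      nlinarith
  have q3 : 0 ≤ (1 - 2 * y) * (1 - c) := by apply mul_nonneg <;> linarith
  have q4 := mul_le_mul_of_nonneg_left q1 q3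
  have q5 : 0 ≤ 1 + (s + e) := by linarith
  have q6 := mul_le_mul_of_nonneg_left q2 q5
  nlinarith

lemma aux_P2o (Rs c y A s t e f : ℝ) (hRs : 3 ≤ Rs) (hc0 : 0 ≤ c) (hc1 : c ≤ 1 / 3)
    (hy : y * Rs = 1) (hA : Rs ≤ A)
    (hs : 0 ≤ s) (ht : 0 < t) (he : -(s * (2 * y)) ≤ e)
    (hX : (1 - c) * (1 + t * y) ≤ 1 + t - f) :
    (1 - 2 * y) * (1 - c) * (A + s + t) ≤ (A - 1 - 1 + (s + e)) * (1 + (t - f)) := by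
  have hy0 : 0 < y := by
    by_contra hh
    nlinarith
  have hy3 : y ≤ 1 / 3 := by nlinarith
  have hAy : 1 ≤ A * y := by nlinarith
  have hty : 0 ≤ t * y := by positivity
  have w1 : (1 - 2 * y) * (A + s) ≤ A - 2 + (s + e) := by nlinarith
  have w0 : 0 ≤ (1 - 2 * y) * (A + s) := by apply mul_nonneg <;> linarith
  have w2 : A + s + t ≤ (A + s) * (1 + t * y) := by
    have : 0 ≤ (A * y - 1) * t := by apply mul_nonneg <;> linarith
    have : 0 ≤ s * (t * y) := by positivity
    nlinarith
  have w3 : 0 ≤ (1 - c) * (1 + t * y) := by apply mul_nonneg <;> linarith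
  calc (1 - 2 * y) * (1 - c) * (A + s + t) ≤ (1 - 2 * y) * (1 - c) * ((A + s) * (1 + t * y)) := by
        apply mul_le_mul_of_nonneg_left w2; apply mul_nonneg <;> linarith
    _ = ((1 - 2 * y) * (A + s)) * ((1 - c) * (1 + t * y)) := by ring
    _ ≤ (A - 2 + (s + e)) * ((1 - c) * (1 + t * y)) := by
        apply mul_le_mul_of_nonneg_right w1 w3
    _ ≤ (A - 2 + (s + e)) * (1 + t - f) := by
        apply mul_le_mul_of_nonneg_left hX; linarith
    _ = _ := by ring

lemma aux_P1e (Rs c y A s t e f : ℝ) (hRs : 3 ≤ Rs) (hc0 : 0 ≤ c) (hc1 : c ≤ 1 / 3)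
    (hy : y * Rs = 1) (hA : Rs - 1 ≤ A)
    (hs : 0 ≤ s) (ht : 0 < t) (ht2 : t ≤ 1 / 2) (he : -(s / 2) ≤ e)
    (hX : (1 - c) * (1 + t * y) ≤ 1 + t - f) :
    (1 - 2 * y) * (1 - c) * (A + s + t) ≤ (1 + (s + e)) * (A - 1 + (t - f)) := by
  have hy0 : 0 < y := by
    by_contra hh
    nlinarith
  have hy3 : y ≤ 1 / 3 := by nlinarith
  have hAy : 1 - y ≤ A * y := by nlinarith
  have q1 : A + s + t ≤ (1 + (s + e)) * (A + t) := by nlinarith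
  have q2 : (1 - 2 * y) * (1 - c) * (A + t) ≤ A - 1 + (t - f) := by
    have z1 : (1 - 2 * y) * (A + t) ≤ A - 1 + t * y := by nlinarith
    have z2 := mul_le_mul_of_nonneg_left z1 (show 0 ≤ 1 - c by linarith)
    nlinarith
  have q3 : 0 ≤ (1 - 2 * y) * (1 - c) := by apply mul_nonneg <;> linarith
  have q4 := mul_le_mul_of_nonneg_left q1 q3
  have q5 : 0 ≤ 1 + (s + e) := by linarith
  have q6 := mul_le_mul_of_nonneg_left q2 q5
  nlinarith

lemma aux_P2e (Rs c y A s t e f : ℝ) (hRs : 3 ≤ Rs) (hc0 : 0 ≤ c) (hc1 : c ≤ 1 / 3)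
    (hy : y * Rs = 1) (hA : Rs - 1 ≤ A)
    (hs : 0 ≤ s) (hs2 : s ≤ 1 / 2) (ht : 0 < t) (he : -(s / 2) ≤ e)
    (hX : (1 - c) * (1 + t * y) ≤ 1 + t - f) :
    (1 - 2 * y) * (1 - c) * (A + s + t) ≤ (A - 1 + (s + e)) * (1 + (t - f)) := by
  have hy0 : 0 < y := by
    by_contra hh
    nlinarith
  have hy3 : y ≤ 1 / 3 := by nlinarith
  have hAy : 1 - y ≤ A * y := by nlinarith
  have w1 : (1 - 2 * y) * (A + s + t) ≤ (A - 1 + (s + e)) * (1 + t * y) := by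
    have v1 : 0 ≤ t * (A * y - (1 - y)) := by apply mul_nonneg <;> linarith
    have v2 : (A - 1 + s / 2) * (1 + t * y) ≤ (A - 1 + (s + e)) * (1 + t * y) := by
      apply mul_le_mul_of_nonneg_right
      · linarith
      · positivity
    have v3 : 0 ≤ s * (t * y) := by positivity
    nlinarith
  have w2 := mul_le_mul_of_nonneg_left w1 (show 0 ≤ 1 - c by linarith)
  have w3 := mul_le_mul_of_nonneg_left hX (show 0 ≤ A - 1 + (s + e) by linarith)
  nlinarith

lemma aux_Bdrop (c y Z T : ℝ) (hc0 : 0 ≤ c) (hy3 : y ≤ 1 / 3) (hZ : 0 ≤ Z)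
    (h : (1 - 2 * y) * Z ≤ T) : (1 - 2 * y) * (1 - c) * Z ≤ T := by
  have : 0 ≤ (1 - 2 * y) * Z := by apply mul_nonneg <;> linarith
  nlinarith

lemma aux_P3o (Rs y A s t e f : ℝ) (hRs : 3 ≤ Rs) 
    (hy : y * Rs = 1) (hA : Rs ≤ A)
    (hs : 0 ≤ s) (hs2 : s ≤ 1 / 2) (hsR : s * (Rs - 1) ≤ 1) (ht : 0 < t) (he : e ≤ 5 / 4 * s)
    (hf : 0 ≤ f) :
    (1 - 2 * y) * (A + s + t) ≤ (1 + (s - e)) * (A + 1 - 1 + (t + f)) := by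
  have hy0 : 0 < y := by
    by_contra hh
    nlinarith
  have hy3 : y ≤ 1 / 3 := by nlinarith
  have hAy : 1 ≤ A * y := by nlinarith
  have hsy : s ≤ 3 / 2 * y := by
    have : y * (s * (Rs - 1)) ≤ y := by nlinarith
    have : y * (s * (Rs - 1)) = s - s * y := by linear_combination s * hy
    nlinarith
  have : (1 - s / 4) * (A + t) ≤ (1 + (s - e)) * (A + 1 - 1 + (t + f)) := by
    apply mul_le_mul <;> linarith
  nlinarith

lemma aux_P3e (Rs y A s t e f : ℝ) (hRs : 3 ≤ Rs) 
    (hy : y * Rs = 1) (hA : Rs - 1 ≤ A)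
    (hs : 0 ≤ s) (hs2 : s ≤ 1 / 2) (hsR : s * (Rs - 1) ≤ 1) (ht : 0 < t) (he : e ≤ 5 / 4 * s)
    (hf : 0 ≤ f) :
    (1 - 2 * y) * (A + s + t) ≤ (1 + (s - e)) * (A - 1 + (t + f)) := by
  have hy0 : 0 < y := by
    by_contra hh
    nlinarith
  have hy3 : y ≤ 1 / 3 := by nlinarith
  have hAy : 1 - y ≤ A * y := by nlinarith
  have hsy : s ≤ 3 / 2 * y := by
    have : y * (s * (Rs - 1)) ≤ y := by nlinarith
    have : y * (s * (Rs - 1)) = s - s * y := by linear_combination s * hy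
    nlinarith
  have h1 : (1 - s / 4) * (A - 1 + t) ≤ (1 + (s - e)) * (A - 1 + (t + f)) := by
    apply mul_le_mul <;> linarith
  have h2 : 0 ≤ (1 - 2 * y) * (5 / 8 - s) := by apply mul_nonneg <;> linarith
  have h3 : 0 ≤ (3 / 2 * y - s) * (A - 1 + t) := by apply mul_nonneg <;> linarith
  have h4 : 0 ≤ t * y := by positivity
  nlinarith

lemma aux_P4o (Rs y A s t e f : ℝ) (hRs : 3 ≤ Rs) 
    (hy : y * Rs = 1) (hA : Rs ≤ A)
    (hs : 0 ≤ s) (hs2 : s ≤ 1 / 2) (ht : 0 < t) (he : e ≤ 5 / 4 * s)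
    (hf : 0 ≤ f) :
    (1 - 2 * y) * (A + s + t) ≤ (A + 1 - 1 + (s - e)) * (1 + (t + f)) := by
  have hy0 : 0 < y := by
    by_contra hh
    nlinarith
  have hy3 : y ≤ 1 / 3 := by nlinarith
  have hAy : 1 ≤ A * y := by nlinarith
  have : (A - s / 4) * (1 + t) ≤ (A + 1 - 1 + (s - e)) * (1 + (t + f)) := by
    apply mul_le_mul <;> linarith
  nlinarith

lemma aux_P4e (Rs y A s t e f : ℝ) (hRs : 3 ≤ Rs) 
    (hy : y * Rs = 1) (hA : Rs - 1 ≤ A)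
    (hs : 0 ≤ s) (hs2 : s ≤ 1 / 2) (ht : 0 < t) (he : e ≤ 5 / 4 * s)
    (hf : 0 ≤ f) :
    (1 - 2 * y) * (A + s + t) ≤ (A - 1 + (s - e)) * (1 + (t + f)) := by
  have hy0 : 0 < y := by
    by_contra hh
    nlinarith
  have hy3 : y ≤ 1 / 3 := by nlinarith
  have hAy : 1 - y ≤ A * y := by nlinarith
  have h1 : (A - 1 - s / 4) * (1 + t) ≤ (A - 1 + (s - e)) * (1 + (t + f)) := by
    apply mul_le_mul <;> linarith
  have h2 : 0 ≤ (1 / 3 - y) * (1 - s) := by apply mul_nonneg <;> linarith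
  have h3 : 0 ≤ A - 2 - s / 4 + 2 * y := by
    rcases le_total A (9 / 4) with h | h
    · nlinarith
    · linarith
  have h4 := mul_nonneg ht.le h3
  nlinarith

open Filter Topology in
/-- abstract continued fraction data -/
structure CFData (a lam : ℕ → ℤ) (t d L : ℕ → ℝ) : Prop where
  ha : ∀ i, 2 ≤ a i
  hl : ∀ i, (Odd (a i) ∧ lam i = 1) ∨ (Even (a i) ∧ lam i = 0)
  ht : ∀ i, 0 < t i
  hta : ∀ i, t i * (a i + t (i + 1)) = 1
  hd0 : d 0 = 1
  hd : ∀ i, d (i + 1) = t i * d i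
  hL : ∀ i, L i = lam i * d (i + 1) + L (i + 1)
  hLlim : Tendsto L atTop (𝓝 0)

/-- denominators, shifted -/
def Qs (a : ℕ → ℤ) : ℕ → ℝ
  | 0 => 0
  | 1 => 1
  | k + 2 => a k * Qs a (k + 1) + Qs a k

/-- alternating sums of denominators -/
def Es (a lam : ℕ → ℤ) : ℕ → ℝ
  | 0 => 0
  | k + 1 => lam k * Qs a (k + 1) - Es a lam k

section CF
open Filter Topology
variable {a lam : ℕ → ℤ} {t d L : ℕ → ℝ}

lemma CFData.haR (h : CFData a lam t d L) (i : ℕ) : (2 : ℝ) ≤ a i := by exact_mod_cast h.ha i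

lemma CFData.t_le (h : CFData a lam t d L) (i : ℕ) : t i ≤ 1 / 2 := by
  nlinarith [h.haR i, h.ht i, h.ht (i + 1), h.hta i, mul_pos (h.ht i) (h.ht (i + 1)),
    mul_nonneg (h.ht i).le (sub_nonneg.2 (h.haR i))]

lemma CFData.t_mul (h : CFData a lam t d L) (i : ℕ) : t i * a i ≤ 1 := by
  nlinarith [h.hta i, mul_pos (h.ht i) (h.ht (i + 1))]

lemma CFData.d_pos (h : CFData a lam t d L) (i : ℕ) : 0 < d i := by
  induction i with
  | zero => rw [h.hd0]; norm_num
  | succ n ih => rw [h.hd]; exact mul_pos (h.ht n) ih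

lemma CFData.d_le (h : CFData a lam t d L) (i : ℕ) : d i ≤ (1 / 2) ^ i := by
  induction i with
  | zero => rw [h.hd0]; norm_num
  | succ n ih =>
    rw [h.hd, pow_succ, mul_comm]
    exact mul_le_mul ih (h.t_le n) (h.ht n).le (by positivity)

lemma CFData.d_lim (h : CFData a lam t d L) : Tendsto d atTop (𝓝 0) :=
  squeeze_zero (fun i => (h.d_pos i).le) h.d_le
    (tendsto_pow_atTop_nhds_zero_of_lt_one (by norm_num) (by norm_num))

lemma CFData.d_rec (h : CFData a lam t d L) (i : ℕ) : d i = a i * d (i + 1) + d (i + 2) := by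
  rw [h.hd (i + 1), h.hd i]
  linear_combination (-(d i)) * h.hta i

lemma CFData.lam_cases (h : CFData a lam t d L) (i : ℕ) : (lam i : ℝ) = 0 ∨ (lam i : ℝ) = 1 := by
  rcases h.hl i with ⟨_, h2⟩ | ⟨_, h2⟩ <;> simp [h2]

lemma CFData.Q_facts (h : CFData a lam t d L) (k : ℕ) :
    0 ≤ Qs a k ∧ (k : ℝ) + 1 ≤ Qs a (k + 1) := by
  induction k with
  | zero => simp [Qs]
  | succ n ih =>
    obtain ⟨h1, h2⟩ := ih
    have hn : (0 : ℝ) ≤ n := by positivity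
    refine ⟨by linarith, ?_⟩
    have : Qs a (n + 1 + 1) = a n * Qs a (n + 1) + Qs a n := rfl
    rw [this]; push_cast
    nlinarith [h.haR n]

lemma CFData.Q_pos (h : CFData a lam t d L) (k : ℕ) : 0 < Qs a (k + 1) := by
  have := (h.Q_facts k).2
  have hn : (0 : ℝ) ≤ k := by positivity
  linarith

lemma CFData.det (h : CFData a lam t d L) (k : ℕ) :
    Qs a (k + 1) * d k + Qs a k * d (k + 1) = 1 := by
  induction k with
  | zero => simp [Qs, h.hd0]
  | succ n ih =>
    have : Qs a (n + 1 + 1) = a n * Qs a (n + 1) + Qs a n := rfl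
    rw [this]
    have := h.d_rec n
    linear_combination ih - Qs a (n + 1) * this

lemma CFData.s_rec (h : CFData a lam t d L) (k : ℕ) :
    Qs a (k + 1) / Qs a (k + 2) * (a k + Qs a k / Qs a (k + 1)) = 1 := by
  have h1 := (h.Q_pos k).ne'
  have h2 := (h.Q_pos (k + 1)).ne'
  have : Qs a (k + 1 + 1) = a k * Qs a (k + 1) + Qs a k := rfl
  field_simp
  rw [this]
  ring

lemma CFData.e_rec (h : CFData a lam t d L) (k : ℕ) :
    Es a lam (k + 1) / Qs a (k + 2) =
      Qs a (k + 1) / Qs a (k + 2) * (lam k - Es a lam k / Qs a (k + 1)) := by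
  have h1 := (h.Q_pos k).ne'
  have h2 := (h.Q_pos (k + 1)).ne'
  have : Es a lam (k + 1) = lam k * Qs a (k + 1) - Es a lam k := rfl
  rw [this]
  field_simp

lemma CFData.s_nonneg (h : CFData a lam t d L) (k : ℕ) : 0 ≤ Qs a k / Qs a (k + 1) :=
  div_nonneg (h.Q_facts k).1 (h.Q_pos k).le

lemma CFData.s_pos (h : CFData a lam t d L) (k : ℕ) : 0 < Qs a (k + 1) / Qs a (k + 2) :=
  div_pos (h.Q_pos k) (h.Q_pos (k + 1))

lemma CFData.s_mul (h : CFData a lam t d L) (k : ℕ) :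
    Qs a (k + 1) / Qs a (k + 2) * a k ≤ 1 := by
  have := h.s_rec k
  nlinarith [mul_nonneg (h.s_pos k).le (h.s_nonneg k)]

lemma CFData.s_le (h : CFData a lam t d L) (k : ℕ) : Qs a k / Qs a (k + 1) ≤ 1 / 2 := by
  cases k with
  | zero => simp [Qs]
  | succ n =>
    have := h.s_mul n
    have h2 := h.s_pos n
    nlinarith [h.haR n]

lemma CFData.e_bd (h : CFData a lam t d L) (k : ℕ) :
    -(Qs a k / Qs a (k + 1) / 2) ≤ Es a lam k / Qs a (k + 1) ∧
    Es a lam k / Qs a (k + 1) ≤ 5 / 4 * (Qs a k / Qs a (k + 1)) ∧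
    Es a lam k / Qs a (k + 1) ≤ 1 / 2 := by
  induction k with
  | zero => simp [Qs, Es]
  | succ n ih =>
    have e1 := h.e_rec n
    have s1 := h.s_mul n
    have s0 := h.s_pos n
    have s2 := h.s_le n
    have s3 := h.s_le (n + 1)
    have s4 := h.s_nonneg n
    rw [show n + 1 + 1 = n + 2 from rfl] at *
    rw [e1]
    generalize Qs a (n + 1) / Qs a (n + 2) = s at *
    generalize Es a lam n / Qs a (n + 1) = e' at *
    generalize Qs a n / Qs a (n + 1) = s' at *
    obtain ⟨i1, i2, i3⟩ := ih
    rcases h.hl n with ⟨o, l⟩ | ⟨o, l⟩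
    · have : (3 : ℝ) ≤ a n := by
        have := h.ha n
        obtain ⟨m, hm⟩ := o
        have : 3 ≤ a n := by omega
        exact_mod_cast this
      have s5 : s ≤ 1 / 3 := by nlinarith
      rw [l]; push_cast
      refine ⟨by nlinarith, by nlinarith, by nlinarith⟩
    · rw [l]; push_cast
      refine ⟨by nlinarith, by nlinarith, by nlinarith⟩

lemma CFData.L_nonneg (h : CFData a lam t d L) (k : ℕ) : 0 ≤ L k := by
  have : Antitone L := by
    apply antitone_nat_of_succ_le
    intro n
    rw [h.hL n]
    have := h.d_pos (n + 1)
    rcases h.lam_cases n with h1 | h1 <;> rw [h1] <;> linarith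
  exact this.le_of_tendsto h.hLlim k

lemma CFData.f_rec (h : CFData a lam t d L) (k : ℕ) :
    L k / d k = t k * (lam k + L (k + 1) / d (k + 1)) := by
  have h1 := (h.d_pos k).ne'
  have h2 := (h.ht k).ne'
  rw [h.hL k, h.hd k]
  field_simp

lemma CFData.L_bd (h : CFData a lam t d L) (Rs θ : ℝ) (hRs : 3 ≤ Rs) (h0 : 0 < θ)
    (h1 : θ * (Rs + θ) = 1) (h3 : θ ≤ 1 / 3) (K : ℕ)
    (hK : ∀ i, K ≤ i → Rs - 1 ≤ a i ∧ (Odd (a i) → Rs ≤ a i)) (k : ℕ) (hk : K ≤ k) :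
    Rs * L k ≤ d k + d (k + 1) - |d (k + 1) - θ * d k| := by
  obtain ⟨Φ, hΦ⟩ : ∃ Φ : ℕ → ℝ, Φ = fun j => d (K + j) + d (K + j + 1)
      - |d (K + j + 1) - θ * d (K + j)| - Rs * L (K + j) := ⟨_, rfl⟩
  have anti : Antitone Φ := by
    apply antitone_nat_of_succ_le
    intro j
    rw [hΦ]
    show d (K + (j + 1)) + d (K + (j + 1) + 1)
      - |d (K + (j + 1) + 1) - θ * d (K + (j + 1))| - Rs * L (K + (j + 1)) ≤ d (K + j) + d (K + j + 1)
      - |d (K + j + 1) - θ * d (K + j)| - Rs * L (K + j)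
    obtain ⟨i, hi⟩ : ∃ i, i = K + j := ⟨_, rfl⟩
    rw [show K + (j + 1) = i + 1 by omega, ← hi]
    obtain ⟨k1, k2⟩ := hK i (by omega)
    have dr := h.d_rec i
    have dp := h.d_pos (i + 1)
    rw [h.hL i]
    have eq1 : d (i + 1) - θ * d i = θ * ((Rs - a i) * d (i + 1) - (d (i + 1 + 1) - θ * d (i + 1))) := by
      rw [dr]; linear_combination (-d (i + 1)) * h1
    have ab : |d (i + 1) - θ * d i| ≤
        θ * (|Rs - a i| * d (i + 1)) + |d (i + 1 + 1) - θ * d (i + 1)| := by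
      rw [eq1, abs_mul, abs_of_pos h0]
      have := abs_sub ((Rs - a i) * d (i + 1)) (d (i + 1 + 1) - θ * d (i + 1))
      rw [abs_mul, abs_of_pos dp] at this
      have nn := abs_nonneg (d (i + 1 + 1) - θ * d (i + 1))
      nlinarith
    have ab2 : θ * (|Rs - a i| * d (i + 1)) ≤ (a i - Rs * lam i) * d (i + 1) := by
      rw [← mul_assoc]
      apply mul_le_mul_of_nonneg_right _ dp.le
      rcases h.hl i with ⟨o, l⟩ | ⟨o, l⟩
      · have := k2 o
        rw [l, abs_of_nonpos (by linarith)]; push_cast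
        nlinarith
      · rw [l]; push_cast
        have : |Rs - a i| ≤ a i + 1 := by
          rw [abs_le]; constructor <;> linarith
        have := h.haR i
        nlinarith
    rw [show i + 1 + 1 = i + 2 from rfl] at *
    nlinarith
  have lim : Tendsto Φ atTop (𝓝 0) := by
    have hs : Tendsto (fun j : ℕ => K + j) atTop atTop :=
      tendsto_atTop_mono (fun j => Nat.le_add_left j K) tendsto_id
    have l1 := h.d_lim.comp hs
    have l2 := (h.d_lim.comp (tendsto_add_atTop_nat 1)).comp hs
    have l3 := h.hLlim.comp hs
    have := ((l1.add l2).sub ((l2.sub (l1.const_mul θ)).abs)).sub (l3.const_mul Rs)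
    rw [hΦ]
    simpa [Function.comp_def] using this
  have := anti.le_of_tendsto lim (k - K)
  rw [hΦ] at this
  simp only at this
  rw [show K + (k - K) = k by omega] at this
  linarith

lemma CFData.f_bd (h : CFData a lam t d L) (Rs θ : ℝ) (hRs : 3 ≤ Rs) (h0 : 0 < θ)
    (h1 : θ * (Rs + θ) = 1) (h3 : θ ≤ 1 / 3) (K : ℕ)
    (hK : ∀ i, K ≤ i → Rs - 1 ≤ a i ∧ (Odd (a i) → Rs ≤ a i)) (k : ℕ) (hk : K ≤ k) :
    Rs * (L k / d k) ≤ 1 + t k - |t k - θ| := by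
  have := h.L_bd Rs θ hRs h0 h1 h3 K hK k hk
  have dp := h.d_pos k
  rw [h.hd k, show t k * d k - θ * d k = (t k - θ) * d k by ring, abs_mul, abs_of_pos dp] at this
  rw [← mul_div_assoc, div_le_iff₀ dp]
  nlinarith

lemma CFData.X_bd (h : CFData a lam t d L) (Rs θ c y : ℝ) (hRs : 3 ≤ Rs) (h0 : 0 < θ)
    (h1 : θ * (Rs + θ) = 1) (h3 : θ ≤ 1 / 3) (hc : c = 2 * θ ^ 2 + θ ^ 3) (hy : y * Rs = 1) (K : ℕ)
    (hK : ∀ i, K ≤ i → Rs - 1 ≤ a i ∧ (Odd (a i) → Rs ≤ a i)) (k : ℕ) (hk : K ≤ k) :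
    (1 - c) * (1 + t k * y) ≤ 1 + t k - L k / d k := by
  have fb := h.f_bd Rs θ hRs h0 h1 h3 K hK (k + 1) (by omega)
  rw [h.f_rec k]
  rcases h.hl k with ⟨o, l⟩ | ⟨o, l⟩
  · rw [l]; push_cast
    exact aux_core Rs θ c y (a k) (t k) (t (k + 1)) _ hRs h0 h1 h3 hc hy ((hK k hk).2 o)
      (h.ht k) (h.ht (k + 1)) (h.hta k) fb
  · rw [l]; push_cast
    have tt := h.t_le (k + 1)
    have tp := h.ht k
    have nn := abs_nonneg (t (k + 1) - θ)
    have f2 : L (k + 1) / d (k + 1) ≤ 1 / 2 := by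
      by_contra hh
      push Not at hh
      nlinarith
    have hy0 : 0 < y := by
      by_contra hh
      nlinarith
    have hy3 : y ≤ 1 / 3 := by nlinarith
    have hc0 : 0 ≤ c := by rw [hc]; positivity
    have : 0 ≤ c * (1 + t k * y) := by positivity
    nlinarith

lemma CFData.e_bd2 (h : CFData a lam t d L) (Rs y : ℝ) (hRs : 3 ≤ Rs) (hy : y * Rs = 1) (K : ℕ)
    (hK : ∀ i, K ≤ i → Rs - 1 ≤ a i ∧ (Odd (a i) → Rs ≤ a i)) (k : ℕ) (hk : K + 2 ≤ k) :
    -(Qs a k / Qs a (k + 1) * (2 * y)) ≤ Es a lam k / Qs a (k + 1) := by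
  obtain ⟨j, rfl⟩ : ∃ j, k = j + 2 := ⟨k - 2, by omega⟩
  have hy0 : 0 < y := by
    by_contra hh
    nlinarith
  have hy3 : y ≤ 1 / 3 := by nlinarith
  -- e_{j+1} ≤ 2 y
  have key : Es a lam (j + 1) / Qs a (j + 2) ≤ 2 * y := by
    have b1 := h.e_bd (j + 1)
    have b0 := h.e_bd j
    have s1 := h.s_mul j
    have s0 := h.s_pos j
    have s2 := h.s_le j
    have er := h.e_rec j
    obtain ⟨k1, k2⟩ := hK j (by omega)
    rw [show j + 1 + 1 = j + 2 from rfl] at *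
    generalize Qs a (j + 1) / Qs a (j + 2) = s at *
    generalize Es a lam (j + 1) / Qs a (j + 2) = e at *
    rcases h.hl j with ⟨o, l⟩ | ⟨o, l⟩
    · have := k2 o
      have : s * Rs ≤ 1 := by nlinarith
      have : s ≤ y := by nlinarith
      linarith [b1.2.1]
    · rw [er, l]; push_cast
      have : s * (Rs - 1) ≤ 1 := by nlinarith
      have : s ≤ 2 * y := by
        have : y * (s * (Rs - 1)) ≤ y := by nlinarith
        have : y * (s * (Rs - 1)) = s - s * y := by linear_combination s * hy
        nlinarith
      nlinarith [b0.1]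
  have er := h.e_rec (j + 1)
  rw [show j + 1 + 1 = j + 2 from rfl, show j + 1 + 2 = j + 3 from rfl] at er
  rw [show j + 2 + 1 = j + 3 from rfl, er]
  have s0 := h.s_pos (j + 1)
  rw [show j + 1 + 1 = j + 2 from rfl, show j + 1 + 2 = j + 3 from rfl] at s0
  rcases h.lam_cases (j + 1) with l | l <;> rw [l] <;> nlinarith

set_option maxHeartbeats 2000000 in
/-- the estimate at the transition index -/
lemma CFData.trans (h : CFData a lam t d L) (Rs θ c y : ℝ) (hRs : 3 ≤ Rs) (h0 : 0 < θ)
    (h1 : θ * (Rs + θ) = 1) (h3 : θ ≤ 1 / 3) (hc : c = 2 * θ ^ 2 + θ ^ 3) (hy : y * Rs = 1) (K : ℕ)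
    (hK : ∀ i, K ≤ i → Rs - 1 ≤ a i ∧ (Odd (a i) → Rs ≤ a i)) (j : ℕ) (hj : K + 2 ≤ j)
    (σ u p r : ℝ) (hσ : σ = 1 ∨ σ = -1) (hu : 1 ≤ u) (hp : 1 ≤ p) (hr : 1 ≤ r)
    (hur : u + r = a j * p - σ * lam j) :
    (1 - 2 * y) * (1 - c) ≤
      (Qs a (j + 1) * (u + p * (Qs a j / Qs a (j + 1)) + σ * (Es a lam j / Qs a (j + 1)))) *
      (d (j + 1) * (r + p * t (j + 1) - σ * (L (j + 1) / d (j + 1)))) := by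
  have X := h.X_bd Rs θ c y hRs h0 h1 h3 hc hy K hK (j + 1) (by omega)
  have eb := h.e_bd j
  have eb2 := h.e_bd2 Rs y hRs hy K hK j hj
  have s0 := h.s_nonneg j
  have s2 := h.s_le j
  have sR : Qs a j / Qs a (j + 1) * (Rs - 1) ≤ 1 := by
    obtain ⟨i, rfl⟩ : ∃ i, j = i + 1 := ⟨j - 1, by omega⟩
    have := h.s_mul i
    have k1 := (hK i (by omega)).1
    have := h.s_pos i
    rw [show i + 1 + 1 = i + 2 from rfl] at *
    nlinarith
  have tR : t (j + 1) * (Rs - 1) ≤ 1 := by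
    have := h.t_mul (j + 1)
    have k1 := (hK (j + 1) (by omega)).1
    nlinarith [h.ht (j + 1)]
  have t0 := h.ht (j + 1)
  have t2 := h.t_le (j + 1)
  have f0 : 0 ≤ L (j + 1) / d (j + 1) := div_nonneg (h.L_nonneg _) (h.d_pos _).le
  have qd : Qs a (j + 1) * d (j + 1) * (a j + Qs a j / Qs a (j + 1) + t (j + 1)) = 1 := by
    have q0 := (h.Q_pos j).ne'
    have := h.det j
    rw [h.d_rec j, h.hd (j + 1)] at this
    field_simp
    linear_combination this
  have Q0 := h.Q_pos j
  have d0 := h.d_pos (j + 1)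
  have hA2 := h.haR j
  obtain ⟨k1, k2⟩ := hK j (by omega)
  have lc := h.hl j
  generalize Es a lam j / Qs a (j + 1) = e at *
  generalize Qs a j / Qs a (j + 1) = s at *
  generalize L (j + 1) / d (j + 1) = f at *
  generalize t (j + 1) = t at *
  generalize Qs a (j + 1) = q at *
  generalize d (j + 1) = d at *
  obtain ⟨eb0, eb1, _⟩ := eb
  have hy0 : 0 < y := by
    by_contra hh
    nlinarith
  have hy3 : y ≤ 1 / 3 := by nlinarith
  have hc0 : 0 ≤ c := by rw [hc]; positivity
  have hc1 : c ≤ 1 / 3 := by rw [hc]; nlinarith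
  have X0 : 0 < (1 - c) * (1 + t * y) := by
    apply mul_pos
    · linarith
    · positivity
  suffices H : (1 - 2 * y) * (1 - c) * (a j + s + t) ≤
      (u + p * s + σ * e) * (r + p * t - σ * f) by
    have qd0 : 0 ≤ q * d := by positivity
    have := mul_le_mul_of_nonneg_left H qd0
    have e1 : q * d * ((1 - 2 * y) * (1 - c) * (a j + s + t)) = (1 - 2 * y) * (1 - c) := by
      linear_combination ((1 - 2 * y) * (1 - c)) * qd
    rw [e1] at this
    linarith
  have mono : ∀ c' d' : ℝ, c' = s + σ * e → d' = t - σ * f → 0 < 1 + c' → 0 < 1 + d' →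
      (u + c') * (r + d') ≤ (u + p * s + σ * e) * (r + p * t - σ * f) := by
    intro c' d' hc' hd' g1 g2
    apply mul_le_mul
    · rw [hc']; nlinarith
    · rw [hd']; nlinarith
    · linarith
    · nlinarith
  have hZ : 0 ≤ (a j : ℝ) + s + t := by linarith
  rcases hσ with rfl | rfl
  · refine le_trans ?_ (mono (s + e) (t - f) (by ring) (by ring) (by linarith) (by linarith))
    rcases lc with ⟨o, l⟩ | ⟨o, l⟩
    · have hA := k2 o
      rw [l] at hur
      push_cast at hur
      apply aux_extreme u r (s + e) (t - f) (a j - 1) _ hu hr (by linarith) (by linarith)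
        (by nlinarith) (by linarith)
      · exact aux_P1o Rs θ c y (a j) s t e f hRs h0 h1 h3 hc hy hA s0 t0 tR eb0 X
      · exact aux_P2o Rs c y (a j) s t e f hRs hc0 hc1 hy hA s0 t0 eb2 X
    · rw [l] at hur
      push_cast at hur
      apply aux_extreme u r (s + e) (t - f) (a j) _ hu hr (by linarith) (by linarith)
        (by nlinarith) (by linarith)
      · exact aux_P1e Rs c y (a j) s t e f hRs hc0 hc1 hy k1 s0 t0 t2 eb0 X
      · exact aux_P2e Rs c y (a j) s t e f hRs hc0 hc1 hy k1 s0 s2 t0 eb0 X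
  · refine le_trans ?_ (mono (s - e) (t + f) (by ring) (by ring) (by linarith) (by linarith))
    rcases lc with ⟨o, l⟩ | ⟨o, l⟩
    · have hA := k2 o
      rw [l] at hur
      push_cast at hur
      apply aux_extreme u r (s - e) (t + f) (a j + 1) _ hu hr (by linarith) (by linarith)
        (by nlinarith) (by linarith)
      · exact aux_Bdrop _ _ _ _ hc0 hy3 hZ (aux_P3o Rs y (a j) s t e f hRs hy hA s0 s2 sR t0 eb1 f0)
      · exact aux_Bdrop _ _ _ _ hc0 hy3 hZ (aux_P4o Rs y (a j) s t e f hRs hy hA s0 s2 t0 eb1 f0)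
    · rw [l] at hur
      push_cast at hur
      apply aux_extreme u r (s - e) (t + f) (a j) _ hu hr (by linarith) (by linarith)
        (by nlinarith) (by linarith)
      · exact aux_Bdrop _ _ _ _ hc0 hy3 hZ (aux_P3e Rs y (a j) s t e f hRs hy k1 s0 s2 sR t0 eb1 f0)
      · exact aux_Bdrop _ _ _ _ hc0 hy3 hZ (aux_P4e Rs y (a j) s t e f hRs hy k1 s0 s2 t0 eb1 f0)

/-- coordinates of a lattice point in the `k`-th basis -/
def WS (a lam : ℕ → ℤ) (u v : ℤ) : ℕ → ℤ × ℤ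
  | 0 => (u, v)
  | k + 1 => ((WS a lam u v k).2, (WS a lam u v k).1 + a k * (WS a lam u v k).2 - lam k)

lemma CFData.even_sub (h : CFData a lam t d L) (k : ℕ) : Even (a k - lam k) := by
  rcases h.hl k with ⟨o, l⟩ | ⟨o, l⟩
  · rw [l]; exact o.sub_odd odd_one
  · rw [l]; simpa using o

lemma CFData.WS_odd (h : CFData a lam t d L) (u v : ℤ) (hu : Odd u) (hv : Odd v) (k : ℕ) :
    Odd (WS a lam u v k).1 ∧ Odd (WS a lam u v k).2 := by
  induction k with
  | zero => exact ⟨hu, hv⟩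
  | succ n ih =>
    refine ⟨ih.2, ?_⟩
    show Odd ((WS a lam u v n).1 + a n * (WS a lam u v n).2 - lam n)
    obtain ⟨⟨x, hx⟩, ⟨z, hz⟩⟩ := ih
    obtain ⟨w, hw⟩ := h.even_sub n
    rw [hx, hz]
    exact ⟨x + w + a n * z, by linear_combination hw⟩

lemma WS_I1 (a lam : ℕ → ℤ) (u v : ℤ) (k : ℕ) :
    (u : ℝ) * (-1) ^ k = (WS a lam u v k).1 * Qs a (k + 1) - (WS a lam u v k).2 * Qs a k
      - Es a lam k := by
  induction k with
  | zero => simp [WS, Qs, Es]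
  | succ n ih =>
    have e1 : Qs a (n + 1 + 1) = a n * Qs a (n + 1) + Qs a n := rfl
    have e2 : Es a lam (n + 1) = lam n * Qs a (n + 1) - Es a lam n := rfl
    have e3 : WS a lam u v (n + 1) = ((WS a lam u v n).2,
      (WS a lam u v n).1 + a n * (WS a lam u v n).2 - lam n) := rfl
    rw [e1, e2, e3, pow_succ]
    push_cast
    linear_combination (-1 : ℝ) * ih

lemma CFData.WS_I2 (h : CFData a lam t d L) (u v : ℤ) (k : ℕ) :
    (u : ℝ) * d 1 + v - L 0 = (WS a lam u v k).1 * d (k + 1) + (WS a lam u v k).2 * d k - L k := by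
  induction k with
  | zero => simp [WS, h.hd0]
  | succ n ih =>
    have e3 : WS a lam u v (n + 1) = ((WS a lam u v n).2,
      (WS a lam u v n).1 + a n * (WS a lam u v n).2 - lam n) := rfl
    rw [ih, e3]
    push_cast
    linear_combination ((WS a lam u v n).2 : ℝ) * h.d_rec n - h.hL n

lemma CFData.WS_surj (h : CFData a lam t d L) (k : ℕ) : ∀ U V : ℤ, Odd U → Odd V →
    ∃ u v : ℤ, Odd u ∧ Odd v ∧ WS a lam u v k = (U, V) := by
  induction k with
  | zero => intro U V hU hV; exact ⟨U, V, hU, hV, rfl⟩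
  | succ n ih =>
    intro U V hU hV
    obtain ⟨u, v, hu, hv, hw⟩ := ih (V - a n * U + lam n) U (by
      obtain ⟨x, hx⟩ := hU
      obtain ⟨z, hz⟩ := hV
      obtain ⟨w, hw⟩ := h.even_sub n
      rw [hx, hz]
      exact ⟨z - w - a n * x, by linear_combination (-1 : ℤ) * hw⟩) hU
    refine ⟨u, v, hu, hv, ?_⟩
    show ((WS a lam u v n).2, (WS a lam u v n).1 + a n * (WS a lam u v n).2 - lam n) = _
    rw [hw]
    ext
    · rfl
    · show V - a n * U + lam n + a n * U - lam n = V
      ring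

lemma CFData.opp_lower (h : CFData a lam t d L) (u v : ℤ) (hu : Odd u) (hv : Odd v) (k : ℕ)
    (ho : (WS a lam u v k).1 * (WS a lam u v k).2 < 0) :
    Qs a (k + 1) / 2 ≤ |(u : ℝ)| := by
  have e1 := WS_I1 a lam u v k
  have e2 : |(u : ℝ)| = |(u : ℝ) * (-1) ^ k| := by rw [abs_mul]; simp
  rw [e2, e1]
  have q0 := h.Q_pos k
  have q1 := (h.Q_facts k).1
  obtain ⟨b1, _, b3⟩ := h.e_bd k
  have s2 := h.s_le k
  have b3' : Es a lam k ≤ Qs a (k + 1) / 2 := by rw [div_le_iff₀ q0] at b3; linarith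
  have b1' : -(Qs a (k + 1) / 2) ≤ Es a lam k := by
    have : -(1 / 2) ≤ Es a lam k / Qs a (k + 1) := by linarith
    rw [le_div_iff₀ q0] at this; linarith
  rcases mul_neg_iff.1 ho with ⟨o1, o2⟩ | ⟨o1, o2⟩
  · have p1 : (1 : ℝ) ≤ (WS a lam u v k).1 := by exact_mod_cast o1
    have p2 : ((WS a lam u v k).2 : ℝ) ≤ 0 := by exact_mod_cast o2.le
    refine le_trans ?_ (le_abs_self _)
    nlinarith
  · have p1 : ((WS a lam u v k).1 : ℝ) ≤ -1 := by
      have : (WS a lam u v k).1 ≤ -1 := by omega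
      exact_mod_cast this
    have p2 : (0 : ℝ) ≤ (WS a lam u v k).2 := by exact_mod_cast o2.le
    refine le_trans ?_ (neg_le_abs _)
    nlinarith

lemma CFData.exists_trans (h : CFData a lam t d L) (u v : ℤ) (hu : Odd u) (hv : Odd v) (J : ℕ)
    (ho : (WS a lam u v J).1 * (WS a lam u v J).2 < 0) :
    ∃ k, J ≤ k ∧ (WS a lam u v k).1 * (WS a lam u v k).2 < 0 ∧
      0 < (WS a lam u v (k + 1)).1 * (WS a lam u v (k + 1)).2 := by
  by_contra hcon
  push Not at hcon
  have all : ∀ i, (WS a lam u v (J + i)).1 * (WS a lam u v (J + i)).2 < 0 := by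
    intro i
    induction i with
    | zero => exact ho
    | succ n ih =>
      have := hcon (J + n) (by omega) ih
      have od := h.WS_odd u v hu hv (J + n + 1)
      have : (WS a lam u v (J + n + 1)).1 * (WS a lam u v (J + n + 1)).2 ≠ 0 := by
        apply mul_ne_zero
        · intro h0; rw [h0] at od; exact absurd od.1 (by decide)
        · intro h0; rw [h0] at od; exact absurd od.2 (by decide)
      rw [show J + (n + 1) = J + n + 1 by omega]
      omega
  obtain ⟨N, hN⟩ := exists_nat_gt (2 * |(u : ℝ)|)
  have := h.opp_lower u v hu hv (J + N) (all N)
  have q := (h.Q_facts (J + N)).2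
  push_cast at q
  have : (0 : ℝ) ≤ J := by positivity
  linarith

lemma CFData.opp_bound (h : CFData a lam t d L) (Rs θ c y : ℝ) (hRs : 3 ≤ Rs) (h0 : 0 < θ)
    (h1 : θ * (Rs + θ) = 1) (h3 : θ ≤ 1 / 3) (hc : c = 2 * θ ^ 2 + θ ^ 3) (hy : y * Rs = 1) (K : ℕ)
    (hK : ∀ i, K ≤ i → Rs - 1 ≤ a i ∧ (Odd (a i) → Rs ≤ a i)) (J : ℕ) (hJ : K + 2 ≤ J)
    (u v : ℤ) (hu : Odd u) (hv : Odd v)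
    (ho : (WS a lam u v J).1 * (WS a lam u v J).2 < 0) :
    (1 - 2 * y) * (1 - c) ≤ |(u : ℝ)| * |(u : ℝ) * d 1 + v - L 0| := by
  obtain ⟨k, hk, g1, g2⟩ := h.exists_trans u v hu hv J ho
  have e1 := WS_I1 a lam u v k
  have e2 : |(u : ℝ)| = |(u : ℝ) * (-1) ^ k| := by rw [abs_mul]; simp
  have e3 := h.WS_I2 u v (k + 1)
  have e4 : WS a lam u v (k + 1) = ((WS a lam u v k).2,
      (WS a lam u v k).1 + a k * (WS a lam u v k).2 - lam k) := rfl
  rw [e4] at g2 e3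
  rw [e2, e1, e3, ← abs_mul]
  simp only at g2 ⊢
  generalize (WS a lam u v k).1 = U at *
  generalize (WS a lam u v k).2 = V at *
  have q0 := (h.Q_pos k).ne'
  have d0 := (h.d_pos (k + 1)).ne'
  have dd := h.hd (k + 1)
  have comm : ∀ σ : ℤ, (σ = 1 ∨ σ = -1) → 1 ≤ -(σ * U) → 1 ≤ σ * V →
      1 ≤ σ * (U + a k * V - lam k) →
      (1 - 2 * y) * (1 - c) ≤ |(U * Qs a (k + 1) - V * Qs a k - Es a lam k) *
        ((V : ℝ) * d (k + 1 + 1) + ((U + a k * V - lam k : ℤ) : ℝ) * d (k + 1) - L (k + 1))| := by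
    intro σ hσ m1 m2 m3
    have T := h.trans Rs θ c y hRs h0 h1 h3 hc hy K hK k (by omega) (σ : ℝ)
      ((-(σ * U) : ℤ) : ℝ) ((σ * V : ℤ) : ℝ) ((σ * (U + a k * V - lam k) : ℤ) : ℝ)
      (by rcases hσ with rfl | rfl <;> simp)
      (by exact_mod_cast m1) (by exact_mod_cast m2) (by exact_mod_cast m3)
      (by push_cast; ring)
    refine le_trans T ?_
    refine le_trans (le_abs_self _) (le_of_eq ?_)
    rw [← abs_neg]
    congr 1
    rw [dd]
    push_cast
    have hσ2 : (σ : ℝ) * σ = 1 := by rcases hσ with rfl | rfl <;> simp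
    field_simp
    have hσ3 : (σ : ℝ) ^ 2 = 1 := by rw [pow_two]; exact hσ2
    ring_nf
    simp only [hσ3]
    ring
  rcases mul_neg_iff.1 g1 with ⟨o1, o2⟩ | ⟨o1, o2⟩
  · have o3 : U + a k * V - lam k < 0 := by
      by_contra hh; push Not at hh; nlinarith
    exact comm (-1) (Or.inr rfl) (by omega) (by omega) (by omega)
  · have o3 : 0 < U + a k * V - lam k := by
      by_contra hh; push Not at hh; nlinarith
    exact comm 1 (Or.inl rfl) (by omega) (by omega) (by omega)

lemma CFData.opp_of_large (h : CFData a lam t d L) (J : ℕ) :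
    ∃ C : ℝ, ∀ u v : ℤ, Odd u → Odd v → |(u : ℝ) * d 1 + v - L 0| ≤ 1 → C < |(u : ℝ)| →
      (WS a lam u v J).1 * (WS a lam u v J).2 < 0 := by
  have dp := h.d_pos J
  have dp1 := h.d_pos (J + 1)
  have L0 := h.L_nonneg J
  obtain ⟨M, hM⟩ : ∃ M, M = (1 + L J) / d (J + 1) + (1 + L J) / d J := ⟨_, rfl⟩
  have M1 : (1 + L J) / d (J + 1) ≤ M := by
    rw [hM]; have : 0 ≤ (1 + L J) / d J := by positivity
    linarith
  have M2 : (1 + L J) / d J ≤ M := by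
    rw [hM]; have : 0 ≤ (1 + L J) / d (J + 1) := by positivity
    linarith
  rw [div_le_iff₀ dp1] at M1
  rw [div_le_iff₀ dp] at M2
  refine ⟨M * Qs a (J + 1) + M * Qs a J + |Es a lam J|, ?_⟩
  intro u v hu hv hX hC
  have od := h.WS_odd u v hu hv J
  have hne : (WS a lam u v J).1 * (WS a lam u v J).2 ≠ 0 := by
    apply mul_ne_zero
    · intro h0; rw [h0] at od; exact absurd od.1 (by decide)
    · intro h0; rw [h0] at od; exact absurd od.2 (by decide)
  by_contra hcon
  have hpos : 0 < (WS a lam u v J).1 * (WS a lam u v J).2 := by omega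
  have e1 := WS_I1 a lam u v J
  have e2 : |(u : ℝ)| = |(u : ℝ) * (-1) ^ J| := by rw [abs_mul]; simp
  have e3 := h.WS_I2 u v J
  rw [e2, e1] at hC
  rw [e3, abs_le] at hX
  have q0 := h.Q_pos J
  have q1 := (h.Q_facts J).1
  generalize (WS a lam u v J).1 = U at *
  generalize (WS a lam u v J).2 = V at *
  have bd : |(U : ℝ)| ≤ M ∧ |(V : ℝ)| ≤ M := by
    rcases mul_pos_iff.1 hpos with ⟨o1, o2⟩ | ⟨o1, o2⟩
    · have p1 : (0 : ℝ) < U := by exact_mod_cast o1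
      have p2 : (0 : ℝ) < V := by exact_mod_cast o2
      have m1 := mul_pos p1 dp1
      have m2 := mul_pos p2 dp
      rw [abs_of_pos p1, abs_of_pos p2]
      constructor
      · apply le_of_mul_le_mul_right _ dp1; linarith
      · apply le_of_mul_le_mul_right _ dp; linarith
    · have p1 : (U : ℝ) < 0 := by exact_mod_cast o1
      have p2 : (V : ℝ) < 0 := by exact_mod_cast o2
      have m1 := mul_pos (neg_pos.2 p1) dp1
      have m2 := mul_pos (neg_pos.2 p2) dp
      rw [abs_of_neg p1, abs_of_neg p2]
      constructor
      · apply le_of_mul_le_mul_right _ dp1; linarith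
      · apply le_of_mul_le_mul_right _ dp; linarith
  have : |(U : ℝ) * Qs a (J + 1) - V * Qs a J - Es a lam J| ≤
      |(U : ℝ)| * Qs a (J + 1) + |(V : ℝ)| * Qs a J + |Es a lam J| := by
    refine le_trans (abs_sub _ _) ?_
    have := abs_sub ((U : ℝ) * Qs a (J + 1)) (V * Qs a J)
    rw [abs_mul, abs_mul, abs_of_pos q0, abs_of_nonneg q1] at this
    linarith
  nlinarith [mul_le_mul_of_nonneg_right bd.1 q0.le, mul_le_mul_of_nonneg_right bd.2 q1]

lemma CFData.small (h : CFData a lam t d L) (Rs θ : ℝ) (hRs : 3 ≤ Rs) (h0 : 0 < θ)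
    (h1 : θ * (Rs + θ) = 1) (h3 : θ ≤ 1 / 3) (K : ℕ)
    (hK : ∀ i, K ≤ i → Rs - 1 ≤ a i ∧ (Odd (a i) → Rs ≤ a i)) (k : ℕ) (hk : K ≤ k) :
    ∃ u v : ℤ, Odd u ∧ Odd v ∧ (k : ℝ) / 2 ≤ |(u : ℝ)| ∧
      |(u : ℝ)| * |(u : ℝ) * d 1 + v - L 0| ≤ 4 := by
  obtain ⟨u, v, hu, hv, hw⟩ := h.WS_surj k 1 (-1) (by decide) (by decide)
  refine ⟨u, v, hu, hv, ?_, ?_⟩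
  · have := h.opp_lower u v hu hv k (by rw [hw]; norm_num)
    have := (h.Q_facts k).2
    linarith
  · have e1 := WS_I1 a lam u v k
    have e2 : |(u : ℝ)| = |(u : ℝ) * (-1) ^ k| := by rw [abs_mul]; simp
    have e3 := h.WS_I2 u v k
    rw [hw] at e1 e3
    rw [e2, e1, e3]
    have q0 := h.Q_pos k
    have q1 := (h.Q_facts k).1
    obtain ⟨b1, _, b3⟩ := h.e_bd k
    have s2 := h.s_le k
    have b3' : Es a lam k ≤ Qs a (k + 1) / 2 := by rw [div_le_iff₀ q0] at b3; linarith
    have b1' : -(Qs a (k + 1) / 2) ≤ Es a lam k := by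
      have : -(1 / 2) ≤ Es a lam k / Qs a (k + 1) := by linarith
      rw [le_div_iff₀ q0] at this; linarith
    rw [div_le_iff₀ q0] at s2
    have dp := h.d_pos k
    have dp1 := h.d_pos (k + 1)
    have Lb := h.L_bd Rs θ hRs h0 h1 h3 K hK k hk
    have nn := abs_nonneg (d (k + 1) - θ * d k)
    have L0 := h.L_nonneg k
    have d2 : d (k + 1) ≤ d k / 2 := by
      rw [h.hd]; nlinarith [h.t_le k]
    have det := h.det k
    have y1 : |((1 : ℤ) : ℝ) * Qs a (k + 1) - ((-1 : ℤ) : ℝ) * Qs a k - Es a lam k| ≤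
        2 * Qs a (k + 1) := by
      rw [abs_le]; push_cast; constructor <;> linarith
    have y2 : |((1 : ℤ) : ℝ) * d (k + 1) + ((-1 : ℤ) : ℝ) * d k - L k| ≤ 2 * d k := by
      rw [abs_le]; push_cast; constructor <;> nlinarith
    have := mul_le_mul y1 y2 (abs_nonneg _) (by positivity)
    have : 0 ≤ Qs a k * d (k + 1) := by positivity
    nlinarith

end CF

lemma nicf_fract (α : ℝ) (heps : ∀ i, nicfE α i = 1) (i : ℕ) :
    Int.fract (nicfT α i)⁻¹ ≤ 1 / 2 := by
  by_contra hcon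
  have := heps (i + 2)
  rw [nicfE, if_neg hcon] at this
  norm_num at this

lemma nicf_T_succ (α : ℝ) (heps : ∀ i, nicfE α i = 1) (i : ℕ) :
    nicfT α (i + 1) = Int.fract (nicfT α i)⁻¹ := by
  rw [nicfT, if_pos (nicf_fract α heps i)]

lemma nicf_A_succ (α : ℝ) (heps : ∀ i, nicfE α i = 1) (i : ℕ) :
    nicfA α (i + 1) = ⌊(nicfT α i)⁻¹⌋ := by
  rw [nicfA, if_pos (nicf_fract α heps i)]

lemma nicf_T_facts (α : ℝ) (hirr : Irrational α) (h0 : 0 < α) (h12 : α < 1 / 2)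
    (heps : ∀ i, nicfE α i = 1) (i : ℕ) :
    Irrational (nicfT α i) ∧ 0 < nicfT α i ∧ nicfT α i ≤ 1 / 2 := by
  induction i with
  | zero => exact ⟨hirr, h0, h12.le⟩
  | succ n ih =>
    have hi : Irrational (nicfT α (n + 1)) := by
      rw [nicf_T_succ α heps n, Int.fract]
      exact (irrational_inv_iff.2 ih.1).sub_intCast _
    refine ⟨hi, ?_, ?_⟩
    · have : 0 ≤ nicfT α (n + 1) := by rw [nicf_T_succ α heps n]; exact Int.fract_nonneg _
      exact lt_of_le_of_ne this hi.ne_zero.symm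
    · rw [nicf_T_succ α heps n]; exact nicf_fract α heps n

lemma nicf_A_ge (α : ℝ) (hirr : Irrational α) (h0 : 0 < α) (h12 : α < 1 / 2)
    (heps : ∀ i, nicfE α i = 1) (i : ℕ) : 2 ≤ nicfA α (i + 1) := by
  obtain ⟨_, h1, h2⟩ := nicf_T_facts α hirr h0 h12 heps i
  rw [nicf_A_succ α heps i, Int.le_floor]
  push_cast
  rw [le_inv_comm₀ (by norm_num) h1]
  linarith

lemma nicf_hta (α : ℝ) (hirr : Irrational α) (h0 : 0 < α) (h12 : α < 1 / 2)
    (heps : ∀ i, nicfE α i = 1) (i : ℕ) :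
    nicfT α i * (nicfA α (i + 1) + nicfT α (i + 1)) = 1 := by
  rw [nicf_A_succ α heps i, nicf_T_succ α heps i, Int.floor_add_fract]
  exact mul_inv_cancel₀ (nicf_T_facts α hirr h0 h12 heps i).2.1.ne'

lemma nicf_D_succ (α : ℝ) (i : ℕ) : nicfD α (i + 1) = nicfT α i * nicfD α i := by
  rw [nicfD, nicfD, Finset.prod_range_succ, mul_comm]

lemma lam2_cases (α : ℝ) (i : ℕ) : (Odd (nicfA α i) ∧ lamStar2 α i = 1) ∨
    (Even (nicfA α i) ∧ lamStar2 α i = 0) := by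
  rw [lamStar2]
  by_cases h : Odd (nicfA α i)
  · left; exact ⟨h, if_pos h⟩
  · right; exact ⟨Int.not_odd_iff_even.1 h, if_neg h⟩

open Filter Topology in
lemma nicf_data (α : ℝ) (hirr : Irrational α) (h0 : 0 < α) (h12 : α < 1 / 2)
    (heps : ∀ i, nicfE α i = 1) :
    ∃ L : ℕ → ℝ, CFData (fun i => nicfA α (i + 1)) (fun i => lamStar2 α (i + 1)) (nicfT α)
      (nicfD α) L ∧ 2 * gammaStar2 α = 1 + α + L 0 := by
  have hta := nicf_hta α hirr h0 h12 heps
  have hd := nicf_D_succ α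
  have hd0 : nicfD α 0 = 1 := by simp [nicfD]
  have ht := fun i => (nicf_T_facts α hirr h0 h12 heps i).2.1
  have ha := nicf_A_ge α hirr h0 h12 heps
  have hl := fun i => lam2_cases α (i + 1)
  -- auxiliary data with `lam`-independent facts
  have dpos : ∀ i, 0 < nicfD α i := by
    intro i
    induction i with
    | zero => rw [hd0]; norm_num
    | succ n ih => rw [hd]; exact mul_pos (ht n) ih
  have dle : ∀ i, nicfD α i ≤ (1 / 2) ^ i := by
    intro i
    induction i with
    | zero => rw [hd0]; norm_num
    | succ n ih =>
      rw [hd, pow_succ, mul_comm]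
      exact mul_le_mul ih (nicf_T_facts α hirr h0 h12 heps n).2.2 (ht n).le (by positivity)
  have dlim : Tendsto (nicfD α) atTop (𝓝 0) :=
    squeeze_zero (fun i => (dpos i).le) dle
      (tendsto_pow_atTop_nhds_zero_of_lt_one (by norm_num) (by norm_num))
  have drec : ∀ i, nicfD α i = nicfA α (i + 1) * nicfD α (i + 1) + nicfD α (i + 2) := by
    intro i
    rw [hd (i + 1), hd i]
    linear_combination (-(nicfD α i)) * hta i
  have d1 : nicfD α 1 = α := by rw [hd 0, hd0, mul_one]; rfl
  have sumA : ∀ n, ∑ i ∈ Finset.range n, (nicfA α (i + 1) : ℝ) * nicfD α (i + 1) =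
      1 + α - nicfD α n - nicfD α (n + 1) := by
    intro n
    induction n with
    | zero => simp [hd0, d1]
    | succ n ih =>
      rw [Finset.sum_range_succ, ih]
      linear_combination (-1 : ℝ) * drec n
  have haR : ∀ i, (2 : ℝ) ≤ nicfA α (i + 1) := fun i => by exact_mod_cast ha i
  have lamc : ∀ i, (lamStar2 α (i + 1) : ℝ) = 0 ∨ (lamStar2 α (i + 1) : ℝ) = 1 := by
    intro i
    rcases hl i with ⟨_, h2⟩ | ⟨_, h2⟩ <;> simp [h2]
  have hsum : Summable (fun k : ℕ =>
      (((nicfA α (k + 1) : ℝ) + (lamStar2 α (k + 1) : ℝ)) / 2) * nicfD α (k + 1)) := by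
    refine summable_of_sum_range_le (c := 1 + α) ?_ ?_
    · intro k
      have := dpos (k + 1)
      have := haR k
      rcases lamc k with l | l <;> rw [l] <;> positivity
    · intro n
      refine le_trans (Finset.sum_le_sum (g := fun i => (nicfA α (i + 1) : ℝ) * nicfD α (i + 1)) ?_) ?_
      · intro k _
        apply mul_le_mul_of_nonneg_right _ (dpos (k + 1)).le
        have := haR k
        rcases lamc k with l | l <;> rw [l] <;> linarith
      · rw [sumA]
        have := dpos n
        have := dpos (n + 1)
        linarith
  have hlim := hsum.hasSum.tendsto_sum_nat
  rw [← gammaStar2] at hlim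
  have hS : ∀ n, ∑ i ∈ Finset.range n,
      (((nicfA α (i + 1) : ℝ) + (lamStar2 α (i + 1) : ℝ)) / 2) * nicfD α (i + 1) =
      (1 + α - nicfD α n - nicfD α (n + 1) +
        ∑ i ∈ Finset.range n, (lamStar2 α (i + 1) : ℝ) * nicfD α (i + 1)) / 2 := by
    intro n
    rw [← sumA, ← Finset.sum_add_distrib, Finset.sum_div]
    apply Finset.sum_congr rfl
    intro i _
    ring
  refine ⟨fun n => 2 * gammaStar2 α - 1 - α -
    ∑ i ∈ Finset.range n, (lamStar2 α (i + 1) : ℝ) * nicfD α (i + 1), ?_, by simp⟩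
  refine ⟨ha, hl, ht, hta, hd0, hd, ?_, ?_⟩
  · intro i
    simp only [Finset.sum_range_succ]
    ring
  · have e : (fun n => 2 * gammaStar2 α - 1 - α -
        ∑ i ∈ Finset.range n, (lamStar2 α (i + 1) : ℝ) * nicfD α (i + 1)) =
        fun n => 2 * gammaStar2 α - 2 * (∑ i ∈ Finset.range n,
      (((nicfA α (i + 1) : ℝ) + (lamStar2 α (i + 1) : ℝ)) / 2) * nicfD α (i + 1))
        - nicfD α n - nicfD α (n + 1) := by
      funext n
      rw [hS]
      ring
    rw [e]
    have dlim1 : Tendsto (fun n => nicfD α (n + 1)) atTop (𝓝 0) :=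
      dlim.comp (tendsto_add_atTop_nat 1)
    have := (((hlim.const_mul 2).const_sub (2 * gammaStar2 α)).sub dlim).sub dlim1
    simpa using this

/-- Theorem 5: lower bound for `M(α,γ_**)` when the NICF expansion of `α` is regular
(all `ε_i = +1`). -/
theorem stmt4 (α : ℝ) (hirr : Irrational α) (h0 : 0 < α) (h12 : α < 1 / 2)
    (heps : ∀ i, nicfE α i = 1)
    (R : ℕ) (hR2 : 2 ≤ R)
    (hbd : ∀ᶠ i in Filter.atTop, (R : ℤ) ≤ nicfA α i)
    (hfreq : ∃ᶠ i in Filter.atTop, nicfA α i = (R : ℤ))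
    (Rs θ1 : ℝ)
    (hRs : Rs = if Odd R then (R : ℝ) else (R : ℝ) + 1)
    (hθ1 : θ1 = (Real.sqrt (Rs ^ 2 + 4) - Rs) / 2) :
    Mval α (gammaStar2 α) ≥ 1 / 4 * (1 - 2 / Rs) * (1 - 2 * θ1 ^ 2 - θ1 ^ 3) ∧
      1 / 4 * (1 - 2 / Rs) * (1 - 2 * θ1 ^ 2 - θ1 ^ 3) ≥
        1 / 4 * (1 - 2 / Rs - 2 / Rs ^ 2 + 3 / Rs ^ 3) := by
  have hRs3 : 3 ≤ Rs := by
    rw [hRs]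
    split_ifs with ho
    · obtain ⟨m, hm⟩ := ho
      have : 3 ≤ R := by omega
      exact_mod_cast this
    · have : (2 : ℝ) ≤ R := by exact_mod_cast hR2
      linarith
  obtain ⟨hθ0, hθe, hθ3⟩ := aux_theta Rs θ1 hRs3 hθ1
  refine ⟨?_, aux_second Rs θ1 hRs3 hθ0 hθe⟩
  obtain ⟨L, h, hγ⟩ := nicf_data α hirr h0 h12 heps
  have d1 : nicfD α 1 = α := by rw [nicf_D_succ]; simp [nicfD, nicfT]
  obtain ⟨K, hK0⟩ := Filter.eventually_atTop.1 hbd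
  have hK : ∀ i, K ≤ i → Rs - 1 ≤ (nicfA α (i + 1) : ℝ) ∧
      (Odd (nicfA α (i + 1)) → Rs ≤ (nicfA α (i + 1) : ℝ)) := by
    intro i hi
    have hb := hK0 (i + 1) (by omega)
    have hb' : (R : ℝ) ≤ (nicfA α (i + 1) : ℝ) := by exact_mod_cast hb
    rw [hRs]
    split_ifs with ho
    · exact ⟨by linarith, fun _ => hb'⟩
    · refine ⟨by linarith, fun hodd => ?_⟩
      rw [Nat.not_odd_iff_even] at ho
      obtain ⟨m, hm⟩ := ho
      obtain ⟨m', hm'⟩ := hodd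
      have : (R : ℤ) + 1 ≤ nicfA α (i + 1) := by omega
      exact_mod_cast this
  obtain ⟨y, hy⟩ : ∃ y, y = 1 / Rs := ⟨_, rfl⟩
  have hyR : y * Rs = 1 := by rw [hy]; field_simp
  obtain ⟨c, hc⟩ : ∃ c, c = 2 * θ1 ^ 2 + θ1 ^ 3 := ⟨_, rfl⟩
  obtain ⟨C, hC⟩ := h.opp_of_large (K + 2)
  have hB : 1 / 4 * (1 - 2 / Rs) * (1 - 2 * θ1 ^ 2 - θ1 ^ 3) = (1 - 2 * y) * (1 - c) / 4 := by
    rw [hy, hc]; ring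
  rw [hB]
  obtain ⟨B, hBd⟩ : ∃ B, B = (1 - 2 * y) * (1 - c) := ⟨_, rfl⟩
  rw [← hBd]
  have key : ∀ n : ℤ, C + 1 < |(n : ℝ)| →
      B / 4 * |(n : ℝ)| ≤ (|(n : ℝ)| * nint (n * α - gammaStar2 α)) * (|(n : ℝ)| + 1 / 2) := by
    intro n hn
    obtain ⟨m, hm⟩ : ∃ m, m = round ((n : ℝ) * α - gammaStar2 α) := ⟨_, rfl⟩
    have hu : Odd (2 * n - 1) := ⟨n - 1, by ring⟩
    have hv : Odd (-(2 * m + 1)) := ⟨-m - 1, by ring⟩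
    have eX : ((2 * n - 1 : ℤ) : ℝ) * nicfD α 1 + ((-(2 * m + 1) : ℤ) : ℝ) - L 0 =
        2 * ((n : ℝ) * α - gammaStar2 α - m) := by
      rw [d1]; push_cast; linear_combination hγ
    have hnint : nint (n * α - gammaStar2 α) = |(n : ℝ) * α - gammaStar2 α - m| := by
      rw [nint, hm]
    have hhalf : |(n : ℝ) * α - gammaStar2 α - m| ≤ 1 / 2 := by
      rw [hm]; exact abs_sub_round _
    have hX1 : |((2 * n - 1 : ℤ) : ℝ) * nicfD α 1 + ((-(2 * m + 1) : ℤ) : ℝ) - L 0| ≤ 1 := by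
      rw [eX, abs_mul, abs_two]; linarith
    have hub : |((2 * n - 1 : ℤ) : ℝ)| ≤ 2 * |(n : ℝ)| + 1 := by
      push_cast
      refine le_trans (abs_sub _ _) ?_
      rw [abs_mul, abs_two, abs_one]
    have hlb : C < |((2 * n - 1 : ℤ) : ℝ)| := by
      have := abs_sub_abs_le_abs_sub (2 * (n : ℝ)) 1
      rw [abs_mul, abs_two, abs_one] at this
      push_cast
      have := abs_nonneg (n : ℝ)
      linarith
    have := h.opp_bound Rs θ1 c y hRs3 hθ0 hθe hθ3 hc hyR K hK (K + 2) le_rfl _ _ hu hv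
      (hC _ _ hu hv hX1 hlb)
    rw [eX, abs_mul 2, abs_two, ← hBd] at this
    rw [hnint]
    generalize |(n : ℝ) * α - gammaStar2 α - m| = x at *
    have x0 : 0 ≤ x ∨ x < 0 := le_or_gt 0 x
    have nn := abs_nonneg (n : ℝ)
    have un := abs_nonneg ((2 * n - 1 : ℤ) : ℝ)
    generalize |(n : ℝ)| = w at *
    generalize |((2 * n - 1 : ℤ) : ℝ)| = z at *
    rcases x0 with x0 | x0
    · have : B ≤ (2 * w + 1) * (2 * x) := le_trans this
        (mul_le_mul_of_nonneg_right hub (by linarith))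
      nlinarith
    · exfalso
      have := abs_nonneg ((n : ℝ) * α - gammaStar2 α - m)
      have hB0 : 0 < B := by
        rw [hBd]
        have : y ≤ 1 / 3 := by nlinarith
        have : c ≤ 1 / 3 := by rw [hc]; nlinarith
        apply mul_pos <;> linarith
      nlinarith
  have habs : Filter.Tendsto (fun n : ℤ => |(n : ℝ)|) Filter.cofinite Filter.atTop := by
    have h1 : Filter.Tendsto (fun n : ℤ => |n|) Filter.cofinite Filter.atTop := by
      rw [Int.cofinite_eq, ← Filter.comap_abs_atTop]
      exact Filter.tendsto_comap
    have := (tendsto_intCast_atTop_atTop (R := ℝ)).comp h1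
    simpa [Function.comp_def] using this
  have hfr : ∃ᶠ n : ℤ in Filter.cofinite,
      |(n : ℝ)| * nint (n * α - gammaStar2 α) ≤ 2 := by
    choose u v hu hv hlow hsm using fun k : ℕ =>
      h.small Rs θ1 hRs3 hθ0 hθe hθ3 K hK (K + k) (by omega)
    choose n hn using hu
    choose m hm using hv
    have tend : Filter.Tendsto (fun k => n k + 1) Filter.atTop Filter.cofinite := by
      rw [Int.cofinite_eq, ← Filter.comap_abs_atTop, Filter.tendsto_comap_iff]
      rw [← tendsto_intCast_atTop_iff (R := ℝ)]
      have hk : Filter.Tendsto (fun k : ℕ => (k : ℝ) / 4 - 1) Filter.atTop Filter.atTop := by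
        apply Filter.tendsto_atTop_add_const_right
        exact tendsto_natCast_atTop_atTop.atTop_div_const (by norm_num)
      refine Filter.tendsto_atTop_mono (fun k => ?_) hk
      have h1 := hlow k
      rw [hn k] at h1
      push_cast at h1
      simp only [Function.comp]
      push_cast
      have h2 : |2 * (n k : ℝ) + 1| ≤ 2 * |(n k : ℝ) + 1| + 1 := by
        have := abs_sub (2 * ((n k : ℝ) + 1)) 1
        rw [abs_mul, abs_two, abs_one] at this
        rwa [show 2 * ((n k : ℝ) + 1) - 1 = 2 * (n k : ℝ) + 1 by ring] at this
      have : (0 : ℝ) ≤ K := by positivity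
      have : (0 : ℝ) ≤ k := by positivity
      linarith
    refine tend.frequently (Filter.Eventually.frequently (Filter.Eventually.of_forall ?_))
    intro k
    have hs := hsm k
    have h3 : nint (((n k + 1 : ℤ) : ℝ) * α - gammaStar2 α) ≤
        |((n k + 1 : ℤ) : ℝ) * α - gammaStar2 α - ((-(m k + 1) : ℤ) : ℝ)| := by
      rw [nint]; exact round_le _ _
    have eX : (u k : ℝ) * nicfD α 1 + (v k : ℝ) - L 0 =
        2 * (((n k + 1 : ℤ) : ℝ) * α - gammaStar2 α - ((-(m k + 1) : ℤ) : ℝ)) := by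
      rw [d1, hn k, hm k]; push_cast; linear_combination hγ
    rw [eX, abs_mul 2, abs_two] at hs
    have h4 : |((n k + 1 : ℤ) : ℝ)| ≤ |(u k : ℝ)| := by
      have : |n k + 1| ≤ |u k| := by
        rw [hn k]
        rcases abs_cases (n k + 1) with ⟨e1, _⟩ | ⟨e1, _⟩ <;>
        rcases abs_cases (2 * n k + 1) with ⟨e2, _⟩ | ⟨e2, _⟩ <;> omega
      exact_mod_cast this
    have := mul_le_mul h4 h3 (by rw [nint]; exact abs_nonneg _) (abs_nonneg _)
    linarith
  have hcob : Filter.IsCoboundedUnder (· ≥ ·) Filter.cofinite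
      (fun n : ℤ => |(n : ℝ)| * nint (n * α - gammaStar2 α)) :=
    Filter.IsCoboundedUnder.of_frequently_le hfr
  show B / 4 ≤ Filter.liminf (fun n : ℤ => |(n : ℝ)| * nint (n * α - gammaStar2 α)) Filter.cofinite
  refine le_of_forall_lt fun b hb => ?_
  obtain ⟨b', hb1, hb2⟩ := exists_between hb
  refine lt_of_lt_of_le hb1 ?_
  refine Filter.le_liminf_of_le hcob ?_
  filter_upwards [habs.eventually_gt_atTop (C + 1),
    habs.eventually_ge_atTop (|b'| / (B / 4 - b')), habs.eventually_ge_atTop 1] with n n1 n2 n3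
  have := key n n1
  rw [div_le_iff₀ (by linarith)] at n2
  generalize |(n : ℝ)| * nint (n * α - gammaStar2 α) = z at *
  generalize |(n : ℝ)| = w at *
  have := le_abs_self b'
  have := abs_nonneg b'
  by_contra hcon
  push Not at hcon
  nlinarith
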